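/- For every real number x, ∑_{n=0}^∞ x^n/(n!)^3 = (1/(4π^2)) ∫_0^{2π} ∫_0^{2π} e^{x cos s + cos s cos t + cos t} cos(x sin s − sin s cos t) cos(cos s sin t − sin t) cosh(sin s sin t) ds dt − (1/(4π^2)) ∫_0^{2π} ∫_0^{2π} e^{x cos s + cos s cos t + cos t} sin(x sin s − sin s cos t) sin(cos s sin t − sin t) sinh(sin s sin t) ds dt. -/

import Mathlib

open Nat Real intervalIntegral

/-!
Write `E = exp (x e^{is} + e^{-is} e^{it} + e^{-it})`. Extracting Fourier coefficients in `s` and then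
in `t` (`integral_series_mul_exp`, applied twice) shows that its integral over `[0, 2π]²` is
`4π² ∑ xⁿ/(n!)³`: the variable `s` forces the powers of `x e^{is}` and `e^{-is} e^{it}` to agree, and
`t` forces the powers of `e^{it}` and `e^{-it}` to agree.

The integrand on the right-hand side is the average of `Re E` at `(s, t)` and at `(s, 2π - t)`
(`re_kernel_symm`), and the reflection `t ↦ 2π - t` does not change the integral.
-/

/-- Orthogonality of the characters `e^{int}` on `[0, 2π]`. -/
lemma integral_character (n m : ℕ) :
    (∫ t in (0:ℝ)..(2 * π), Complex.exp (t * Complex.I) ^ n * Complex.exp (-(t * Complex.I)) ^ m) =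
      if m = n then (2 * π : ℂ) else 0 := by
  have h : ∀ t : ℝ, Complex.exp (t * Complex.I) ^ n * Complex.exp (-(t * Complex.I)) ^ m
      = Complex.exp ((((n : ℂ) - m) * Complex.I) * t) := by
    intro t
    rw [← Complex.exp_nat_mul, ← Complex.exp_nat_mul, ← Complex.exp_add]
    congr 1; ring
  simp_rw [h]
  split_ifs with hmn
  · simp [hmn]
  · have hne : ((n : ℂ) - m) * Complex.I ≠ 0 := by
      refine mul_ne_zero (sub_ne_zero.2 ?_) Complex.I_ne_zero
      exact Nat.cast_injective.ne (Ne.symm hmn)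
    rw [integral_exp_mul_complex hne]
    have h1 : Complex.exp (((n : ℂ) - m) * Complex.I * ((2 * π : ℝ) : ℂ)) = 1 := by
      rw [Complex.exp_eq_one_iff]
      exact ⟨(n : ℤ) - m, by push_cast; ring⟩
    rw [h1]; simp

lemma norm_exp_neg_mul_I (t : ℝ) : ‖Complex.exp (-(t * Complex.I))‖ = 1 := by
  rw [← neg_mul, ← Complex.ofReal_neg, Complex.norm_exp_ofReal_mul_I]

lemma hasSum_cexp (z : ℂ) : HasSum (fun m : ℕ => z ^ m / (m ! : ℂ)) (Complex.exp z) := by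
  rw [Complex.exp_eq_exp_ℂ]
  exact NormedSpace.expSeries_div_hasSum_exp z

/-- The `n`-th Fourier coefficient of `exp (w e^{-it})`. -/
lemma integral_pow_mul_exp (n : ℕ) (w : ℂ) :
    (∫ t in (0:ℝ)..(2 * π),
      Complex.exp (t * Complex.I) ^ n * Complex.exp (w * Complex.exp (-(t * Complex.I)))) =
      2 * π * (w ^ n / (n ! : ℂ)) := by
  have key := intervalIntegral.hasSum_integral_of_dominated_convergence
    (μ := MeasureTheory.volume) (a := 0) (b := 2 * π)
    (F := fun (m : ℕ) (t : ℝ) => (w ^ m / (m ! : ℂ)) *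
      (Complex.exp (t * Complex.I) ^ n * Complex.exp (-(t * Complex.I)) ^ m))
    (f := fun t : ℝ =>
      Complex.exp (t * Complex.I) ^ n * Complex.exp (w * Complex.exp (-(t * Complex.I))))
    (fun m _ => ‖w‖ ^ m / (m ! : ℝ))
    (fun m => Continuous.aestronglyMeasurable (by fun_prop))
    (fun m => Filter.Eventually.of_forall fun t _ => by
      simp [norm_exp_neg_mul_I, Complex.norm_exp_ofReal_mul_I])
    (Filter.Eventually.of_forall fun t _ => Real.summable_pow_div_factorial ‖w‖)
    (by simp)
    (Filter.Eventually.of_forall fun t _ => by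
      refine ((hasSum_cexp (w * Complex.exp (-(t * Complex.I)))).mul_left
        (Complex.exp (t * Complex.I) ^ n)).congr_fun ?_
      intro m
      rw [mul_pow]; ring)
  simp_rw [intervalIntegral.integral_const_mul, integral_character] at key
  refine key.unique ?_
  refine (hasSum_ite_eq n (2 * π * (w ^ n / (n ! : ℂ)))).congr_fun fun m => ?_
  split_ifs with h
  · subst h; ring
  · simp

/-- Pairing an absolutely convergent power series in `e^{it}` with `exp (w e^{-it})` multiplies its
`n`-th coefficient by `wⁿ/n!`. -/
lemma integral_series_mul_exp (c : ℕ → ℂ) (hc : Summable fun n => ‖c n‖) (w : ℂ) :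
    (∫ t in (0:ℝ)..(2 * π), (∑' n, c n * Complex.exp (t * Complex.I) ^ n) *
      Complex.exp (w * Complex.exp (-(t * Complex.I)))) =
      2 * π * ∑' n, c n * (w ^ n / (n ! : ℂ)) := by
  have key := intervalIntegral.hasSum_integral_of_dominated_convergence
    (μ := MeasureTheory.volume) (a := 0) (b := 2 * π)
    (F := fun (n : ℕ) (t : ℝ) => c n *
      (Complex.exp (t * Complex.I) ^ n * Complex.exp (w * Complex.exp (-(t * Complex.I)))))
    (f := fun t : ℝ => (∑' n, c n * Complex.exp (t * Complex.I) ^ n) *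
      Complex.exp (w * Complex.exp (-(t * Complex.I))))
    (fun n _ => ‖c n‖ * Real.exp ‖w‖)
    (fun m => Continuous.aestronglyMeasurable (by fun_prop))
    (fun m => Filter.Eventually.of_forall fun t _ => by
      have h := Complex.norm_exp_le_exp_norm (w * Complex.exp (-(t * Complex.I)))
      rw [norm_mul w, norm_exp_neg_mul_I, mul_one] at h
      rw [norm_mul, norm_mul, norm_pow, Complex.norm_exp_ofReal_mul_I, one_pow, one_mul]
      gcongr)
    (Filter.Eventually.of_forall fun t _ => hc.mul_right _)
    (by simp)
    (Filter.Eventually.of_forall fun t _ => by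
      have hs : Summable fun n => c n * Complex.exp (t * Complex.I) ^ n := by
        refine Summable.of_norm ?_
        simpa [Complex.norm_exp_ofReal_mul_I] using hc
      refine (hs.hasSum.mul_right
        (Complex.exp (w * Complex.exp (-(t * Complex.I))))).congr_fun ?_
      intro m
      ring)
  simp_rw [intervalIntegral.integral_const_mul, integral_pow_mul_exp] at key
  rw [← key.tsum_eq, ← tsum_mul_left]
  exact tsum_congr fun n => by ring

/-- The exponential kernel whose iterated Fourier coefficient is `∑ xⁿ/(n!)³`. -/
noncomputable def kernel (x s t : ℝ) : ℂ :=
  Complex.exp (x * Complex.exp (s * Complex.I)) *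
    Complex.exp (Complex.exp (t * Complex.I) * Complex.exp (-(s * Complex.I))) *
    Complex.exp (Complex.exp (-(t * Complex.I)))

lemma continuous_kernel (x : ℝ) : Continuous fun p : ℝ × ℝ => kernel x p.2 p.1 := by
  unfold kernel; fun_prop

lemma integral_kernel (x : ℝ) :
    (∫ t in (0:ℝ)..(2 * π), ∫ s in (0:ℝ)..(2 * π), kernel x s t) =
      4 * π ^ 2 * ((∑' n : ℕ, x ^ n / (n ! : ℝ) ^ 3 : ℝ) : ℂ) := by
  have hinner : ∀ t : ℝ, (∫ s in (0:ℝ)..(2 * π), kernel x s t) =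
      2 * π * ((∑' n : ℕ, ((x : ℂ) ^ n / (n ! : ℂ) ^ 2) * Complex.exp (t * Complex.I) ^ n) *
        Complex.exp (1 * Complex.exp (-(t * Complex.I)))) := by
    intro t
    have hc : Summable fun n : ℕ => ‖(x : ℂ) ^ n / (n ! : ℂ)‖ := by
      simpa using Real.summable_pow_div_factorial |x|
    have h := integral_series_mul_exp _ hc (Complex.exp (t * Complex.I))
    have e : ∀ s : ℝ, (∑' n : ℕ, (x : ℂ) ^ n / (n ! : ℂ) * Complex.exp (s * Complex.I) ^ n) =
        Complex.exp (x * Complex.exp (s * Complex.I)) := by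
      intro s
      rw [← (hasSum_cexp (x * Complex.exp (s * Complex.I))).tsum_eq]
      exact tsum_congr fun n => by rw [mul_pow]; ring
    simp_rw [e] at h
    unfold kernel
    rw [intervalIntegral.integral_mul_const, h, one_mul, mul_assoc]
    congr 3
    funext n
    ring
  have hc2 : Summable fun n : ℕ => ‖(x : ℂ) ^ n / (n ! : ℂ) ^ 2‖ := by
    refine Summable.of_nonneg_of_le (fun _ => norm_nonneg _) (fun n => ?_)
      (Real.summable_pow_div_factorial |x|)
    have h1 : (1 : ℝ) ≤ n ! := by exact_mod_cast Nat.one_le_iff_ne_zero.2 (Nat.factorial_ne_zero n)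
    simp only [norm_div, norm_pow, Complex.norm_real, Real.norm_eq_abs, Complex.norm_natCast]
    gcongr
    exact le_self_pow₀ h1 two_ne_zero
  simp_rw [hinner]
  rw [intervalIntegral.integral_const_mul, integral_series_mul_exp _ hc2, Complex.ofReal_tsum,
    ← mul_assoc]
  congr 1
  · ring
  · refine tsum_congr fun n => ?_
    push_cast
    field_simp
    simp

lemma re_kernel (x s t : ℝ) : (kernel x s t).re =
    Real.exp (x * Real.cos s + Real.cos s * Real.cos t + Real.cos t + Real.sin s * Real.sin t) *
      Real.cos ((x * Real.sin s - Real.sin s * Real.cos t) +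
        (Real.cos s * Real.sin t - Real.sin t)) := by
  unfold kernel
  rw [← Complex.exp_add, ← Complex.exp_add, Complex.exp_re]
  have hn : ∀ r : ℝ, -((r : ℂ) * Complex.I) = ((-r : ℝ) : ℂ) * Complex.I := by
    intro r; push_cast; ring
  simp only [hn, Complex.add_re, Complex.add_im, Complex.mul_re, Complex.mul_im,
    Complex.exp_ofReal_mul_I_re, Complex.exp_ofReal_mul_I_im, Complex.ofReal_re,
    Complex.ofReal_im, Real.cos_neg, Real.sin_neg]
  congr 2 <;> ring

/-- Averaging over the reflection `t ↦ 2π - t` keeps exactly the part of `Re (kernel x s t)` that is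
even in `t`. -/
lemma re_kernel_symm (x s t : ℝ) :
    Real.exp (x * Real.cos s + Real.cos s * Real.cos t + Real.cos t) *
            Real.cos (x * Real.sin s - Real.sin s * Real.cos t) *
            Real.cos (Real.cos s * Real.sin t - Real.sin t) *
            Real.cosh (Real.sin s * Real.sin t) -
      Real.exp (x * Real.cos s + Real.cos s * Real.cos t + Real.cos t) *
            Real.sin (x * Real.sin s - Real.sin s * Real.cos t) *
            Real.sin (Real.cos s * Real.sin t - Real.sin t) *
            Real.sinh (Real.sin s * Real.sin t) =
      ((kernel x s t).re + (kernel x s (2 * π - t)).re) / 2 := by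
  rw [re_kernel, re_kernel, Real.cos_two_pi_sub, Real.sin_two_pi_sub]
  have h : Real.cos s * -Real.sin t - -Real.sin t = -(Real.cos s * Real.sin t - Real.sin t) := by
    ring
  rw [h, mul_neg, Real.exp_add _ (Real.sin s * Real.sin t),
    Real.exp_add _ (-(Real.sin s * Real.sin t)), Real.cos_add, Real.cos_add, Real.cos_neg,
    Real.sin_neg, Real.cosh_eq, Real.sinh_eq]
  ring

lemma integral_re_kernel (x : ℝ) :
    (∫ t in (0:ℝ)..(2 * π), ∫ s in (0:ℝ)..(2 * π), (kernel x s t).re) =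
      4 * π ^ 2 * ∑' n : ℕ, x ^ n / (n ! : ℝ) ^ 3 := by
  have hk := continuous_kernel x
  have h1 : ∀ t : ℝ, (∫ s in (0:ℝ)..(2 * π), (kernel x s t).re) =
      (∫ s in (0:ℝ)..(2 * π), kernel x s t).re := fun t =>
    Complex.reCLM.intervalIntegral_comp_comm
      (Continuous.intervalIntegrable (hk.comp (by fun_prop : Continuous fun s : ℝ => (t, s))) _ _)
  have h2 : Continuous fun t : ℝ => ∫ s in (0:ℝ)..(2 * π), kernel x s t :=
    intervalIntegral.continuous_parametric_intervalIntegral_of_continuous' hk _ _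
  simp_rw [h1]
  refine (Complex.reCLM.intervalIntegral_comp_comm (h2.intervalIntegrable _ _)).trans ?_
  rw [integral_kernel, Complex.reCLM_apply]
  have : (4 * (π : ℂ) ^ 2) = ((4 * π ^ 2 : ℝ) : ℂ) := by push_cast; ring
  rw [this, Complex.re_ofReal_mul, Complex.ofReal_re]

/-- Real form of the double-integral identity for `∑ xⁿ/(n!)³`. -/
theorem alpha_three_real_double_integral (x : ℝ) :
    (∑' n : ℕ, x ^ n / (n ! : ℝ) ^ 3) =
      (1 / (4 * Real.pi ^ 2)) *
        (∫ t in (0:ℝ)..(2 * Real.pi), ∫ s in (0:ℝ)..(2 * Real.pi),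
          Real.exp (x * Real.cos s + Real.cos s * Real.cos t + Real.cos t) *
            Real.cos (x * Real.sin s - Real.sin s * Real.cos t) *
            Real.cos (Real.cos s * Real.sin t - Real.sin t) *
            Real.cosh (Real.sin s * Real.sin t)) -
      (1 / (4 * Real.pi ^ 2)) *
        (∫ t in (0:ℝ)..(2 * Real.pi), ∫ s in (0:ℝ)..(2 * Real.pi),
          Real.exp (x * Real.cos s + Real.cos s * Real.cos t + Real.cos t) *
            Real.sin (x * Real.sin s - Real.sin s * Real.cos t) *
            Real.sin (Real.cos s * Real.sin t - Real.sin t) *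
            Real.sinh (Real.sin s * Real.sin t)) := by
  have hre : Continuous fun p : ℝ × ℝ => (kernel x p.2 p.1).re :=
    Complex.continuous_re.comp (continuous_kernel x)
  have hI : Continuous fun t : ℝ => ∫ s in (0:ℝ)..(2 * π), (kernel x s t).re :=
    intervalIntegral.continuous_parametric_intervalIntegral_of_continuous' hre _ _
  have hslice : ∀ t : ℝ, Continuous fun s : ℝ => (kernel x s t).re := by
    intro t
    unfold kernel
    fun_prop
  rw [← mul_sub, ← intervalIntegral.integral_sub]
  rotate_left
  · refine Continuous.intervalIntegrable ?_ _ _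
    apply intervalIntegral.continuous_parametric_intervalIntegral_of_continuous'
    unfold Function.uncurry
    fun_prop
  · refine Continuous.intervalIntegrable ?_ _ _
    apply intervalIntegral.continuous_parametric_intervalIntegral_of_continuous'
    unfold Function.uncurry
    fun_prop
  have hinner : ∀ t : ℝ,
      (∫ s in (0:ℝ)..(2 * Real.pi),
          Real.exp (x * Real.cos s + Real.cos s * Real.cos t + Real.cos t) *
            Real.cos (x * Real.sin s - Real.sin s * Real.cos t) *
            Real.cos (Real.cos s * Real.sin t - Real.sin t) *
            Real.cosh (Real.sin s * Real.sin t)) -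
        (∫ s in (0:ℝ)..(2 * Real.pi),
          Real.exp (x * Real.cos s + Real.cos s * Real.cos t + Real.cos t) *
            Real.sin (x * Real.sin s - Real.sin s * Real.cos t) *
            Real.sin (Real.cos s * Real.sin t - Real.sin t) *
            Real.sinh (Real.sin s * Real.sin t)) =
      ((∫ s in (0:ℝ)..(2 * π), (kernel x s t).re) +
        ∫ s in (0:ℝ)..(2 * π), (kernel x s (2 * π - t)).re) / 2 := by
    intro t
    rw [← intervalIntegral.integral_sub (Continuous.intervalIntegrable (by fun_prop) _ _)
      (Continuous.intervalIntegrable (by fun_prop) _ _),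
      ← intervalIntegral.integral_add ((hslice _).intervalIntegrable _ _)
        ((hslice _).intervalIntegrable _ _), ← intervalIntegral.integral_div]
    exact intervalIntegral.integral_congr fun s _ => re_kernel_symm x s t
  have hrefl : (∫ t in (0:ℝ)..(2 * π), ∫ s in (0:ℝ)..(2 * π), (kernel x s (2 * π - t)).re) =
      ∫ t in (0:ℝ)..(2 * π), ∫ s in (0:ℝ)..(2 * π), (kernel x s t).re := by
    have h := intervalIntegral.integral_comp_sub_left (a := 0) (b := 2 * π)
      (fun t : ℝ => ∫ s in (0:ℝ)..(2 * π), (kernel x s t).re) (2 * π)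
    simpa only [sub_self, sub_zero] using h
  have hI' : Continuous fun t : ℝ => ∫ s in (0:ℝ)..(2 * π), (kernel x s (2 * π - t)).re :=
    hI.comp (by fun_prop : Continuous fun t : ℝ => 2 * π - t)
  simp_rw [hinner]
  rw [intervalIntegral.integral_div, intervalIntegral.integral_add (hI.intervalIntegrable _ _)
    (hI'.intervalIntegrable _ _),
    hrefl, integral_re_kernel]
  have := Real.pi_ne_zero
  field_simp
  ring
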